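/- Consider the chain Bell scenario: Alice and Bob each have n inputs and binary ±1 outputs, with chain Bell quantity β_chain(p) = Σ_{k=1}^{n−1}(⟨A_kB_k⟩ + ⟨A_kB_{k+1}⟩) + ⟨A_nB_n⟩ − ⟨A_nB_1⟩. Let p be a bipartite no-signaling box and p̃ a tripartite no-signaling box (Grace has a single input, binary output) implementing a gentle measurement of Bob's observable B₁ with parameter ε ∈ [0,1/2], i.e. p̃(b₁|y=1,a,x) = p(b₁|y=1,a,x) and p̃(g = b₁|b₁,y=1,a,x) = 1/2 + ε if g = b₁, 1/2 − ε otherwise (for all a,x with positive conditioning probability). Then the average total disturbance 𝒟 = Σ_x (1/n) Σ_a p(a|x) Σ_{y ≠ 1} Σ_b |p(b|y,a,x) − p̃(b|y,a,x)| satisfies 𝒟 ≥ (4/n)·ε − (1/n)(2n − β_chain(p)). -/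

import Mathlib

open Finset

/-- The sign `±1` associated with a binary output. -/
def sgn (b : Bool) : ℝ := if b then 1 else -1

/-- A bipartite no-signaling box with binary outputs. -/
def IsNSBox {n m : ℕ} (p : Bool → Bool → Fin n → Fin m → ℝ) : Prop :=
  (∀ a b x y, 0 ≤ p a b x y) ∧
  (∀ x y, ∑ a, ∑ b, p a b x y = 1) ∧
  (∀ a x y y', ∑ b, p a b x y = ∑ b, p a b x y') ∧
  (∀ b y x x', ∑ a, p a b x y = ∑ a, p a b x' y)

/-- A tripartite no-signaling box in which Grace holds a single fixed input. -/
def IsNS3Box {n m : ℕ} (p : Bool → Bool → Bool → Fin n → Fin m → ℝ) : Prop :=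
  (∀ a b g x y, 0 ≤ p a b g x y) ∧
  (∀ x y, ∑ a, ∑ b, ∑ g, p a b g x y = 1) ∧
  (∀ a g x y y', ∑ b, p a b g x y = ∑ b, p a b g x y') ∧
  (∀ b g y x x', ∑ a, p a b g x y = ∑ a, p a b g x' y)

/-- The correlator `⟨A_x B_y⟩` of a bipartite box with binary `±1` outputs. -/
def corr {n m : ℕ} (p : Bool → Bool → Fin n → Fin m → ℝ)
    (x : Fin n) (y : Fin m) : ℝ :=
  ∑ a, ∑ b, sgn a * sgn b * p a b x y

/-- The chain Bell quantity
`β_chain = Σ_{k=1}^{n−1}(⟨A_kB_k⟩ + ⟨A_kB_{k+1}⟩) + ⟨A_nB_n⟩ − ⟨A_nB_1⟩`. -/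
def chainBell {n : ℕ} (hn : 0 < n) (p : Bool → Bool → Fin n → Fin n → ℝ) : ℝ :=
  (∑ i : Fin (n - 1),
    (corr p ⟨i.1, by have := i.2; omega⟩ ⟨i.1, by have := i.2; omega⟩ +
      corr p ⟨i.1, by have := i.2; omega⟩ ⟨i.1 + 1, by have := i.2; omega⟩)) +
  corr p ⟨n - 1, by omega⟩ ⟨n - 1, by omega⟩ - corr p ⟨n - 1, by omega⟩ ⟨0, hn⟩

/-! The conditional disturbances, weighted by `p(a|x)`, add up to the `ℓ¹` distance between `p` and
the Alice–Bob marginal of `p̃`, and each chain correlator not involving `B₁` is `1`-Lipschitz in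
that distance; hence `β(p) - β(p̃) ≤ n 𝒟`. On the other hand `β(p̃)` is the sum, over Grace's
outcomes `g`, of the chain values of the unnormalised boxes `p̃(·, g)`. In a no-signaling box of
mass `W` one has `⟨AB⟩ ≤ W - |⟨A⟩ - ⟨B⟩|`, so following the chain from `⟨B₁⟩` to `-⟨B₁⟩` gives
`β ≤ 2nW - 2|⟨B₁⟩|`. A gentle measurement with parameter `ε` splits `⟨B₁⟩` into the two parts
`⟨B₁⟩/2 ± ε`, whose absolute values add up to at least `2|ε|`, so `β(p̃) ≤ 2n - 4|ε|`. -/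

section Weights

variable {ι : Type*} [Fintype ι] {w v : ι → ℝ}

lemma sum_mul_div_sum (hw : ∀ i, 0 ≤ w i) (i : ι) : (∑ j, w j) * (w i / ∑ j, w j) = w i :=
  mul_div_cancel_of_imp' fun h ↦
    (sum_eq_zero_iff_of_nonneg fun j _ ↦ hw j).1 h i (mem_univ i)

lemma eq_sum_mul_of_div_sum_eq (hw : ∀ i, 0 ≤ w i) {i : ι} {c : ℝ}
    (h : 0 < ∑ j, w j → w i / ∑ j, w j = c) : w i = (∑ j, w j) * c := by
  rcases (sum_nonneg fun j _ ↦ hw j).eq_or_lt with hzero | hpos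
  · rw [← sum_mul_div_sum hw i, ← hzero, zero_mul, zero_mul]
  · rw [← h hpos, sum_mul_div_sum hw i]

lemma sum_mul_sum_abs_div_sum_sub (hw : ∀ i, 0 ≤ w i) (hv : ∀ i, 0 ≤ v i)
    (hwv : ∑ i, v i = ∑ i, w i) :
    (∑ i, w i) * ∑ i, |w i / ∑ j, w j - v i / ∑ j, v j| = ∑ i, |w i - v i| := by
  rw [mul_sum]
  refine sum_congr rfl fun i _ ↦ ?_
  have hvi : (∑ j, w j) * (v i / ∑ j, v j) = v i := hwv ▸ sum_mul_div_sum hv i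
  calc (∑ j, w j) * |w i / ∑ j, w j - v i / ∑ j, v j|
      = |(∑ j, w j) * (w i / ∑ j, w j - v i / ∑ j, v j)| := by
        rw [abs_mul, abs_of_nonneg (sum_nonneg fun j _ ↦ hw j)]
    _ = |w i - v i| := by rw [mul_sub, sum_mul_div_sum hw, hvi]

end Weights

section Chain

variable {m : ℕ}

lemma dist_zero_last_le_sum_dist {E : Type*} [PseudoMetricSpace E] (f : Fin (m + 1) → E) :
    dist (f 0) (f (Fin.last m)) ≤ ∑ i : Fin m, dist (f i.castSucc) (f i.succ) := by
  induction m with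
  | zero => simp
  | succ m ih =>
    rw [Fin.sum_univ_castSucc]
    exact (dist_triangle _ (f (Fin.last m).castSucc) _).trans
      (add_le_add_left (ih fun i ↦ f i.castSucc) _)

lemma two_mul_abs_le_sum_chain (A B : Fin (m + 1) → ℝ) :
    2 * |B 0| ≤
      ∑ i : Fin m, (|A i.castSucc - B i.castSucc| + |A i.castSucc - B i.succ|) +
        |A (Fin.last m) - B (Fin.last m)| + |A (Fin.last m) + B 0| := by
  have hpath : |B 0 - B (Fin.last m)| ≤
      ∑ i : Fin m, (|A i.castSucc - B i.castSucc| + |A i.castSucc - B i.succ|) := by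
    refine (dist_zero_last_le_sum_dist B).trans (sum_le_sum fun i _ ↦ ?_)
    exact dist_triangle_left _ _ (A i.castSucc)
  calc 2 * |B 0| = |(B 0 - B (Fin.last m)) - (A (Fin.last m) - B (Fin.last m)) +
          (A (Fin.last m) + B 0)| := by
        rw [← abs_two, ← abs_mul]; congr 1; ring
    _ ≤ |B 0 - B (Fin.last m)| + |A (Fin.last m) - B (Fin.last m)| + |A (Fin.last m) + B 0| :=
        (abs_add_le _ _).trans (add_le_add_left (abs_sub _ _) _)
    _ ≤ _ := by gcongr

lemma sum_chain_le_sum_abs (c : Fin (m + 1) → Fin (m + 1) → ℝ) :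
    ∑ i : Fin m, (c i.castSucc i.castSucc + c i.castSucc i.succ) +
      c (Fin.last m) (Fin.last m) ≤ ∑ x, ∑ y, |c x y| := by
  rw [Fin.sum_univ_castSucc]
  refine add_le_add (sum_le_sum fun i _ ↦ ?_) ?_
  · calc c i.castSucc i.castSucc + c i.castSucc i.succ
        ≤ |c i.castSucc i.castSucc| + |c i.castSucc i.succ| :=
          add_le_add (le_abs_self _) (le_abs_self _)
      _ = ∑ y ∈ {i.castSucc, i.succ}, |c i.castSucc y| :=
          (sum_pair (f := fun y ↦ |c i.castSucc y|) Fin.castSucc_lt_succ.ne).symm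
      _ ≤ ∑ y, |c i.castSucc y| :=
          sum_le_sum_of_subset_of_nonneg (subset_univ _) fun _ _ _ ↦ abs_nonneg _
  · exact (le_abs_self _).trans
      (single_le_sum (f := fun y ↦ |c (Fin.last m) y|) (fun _ _ ↦ abs_nonneg _) (mem_univ _))

lemma chainBell_succ (hm : 0 < m + 1) (p : Bool → Bool → Fin (m + 1) → Fin (m + 1) → ℝ) :
    chainBell hm p =
      ∑ i : Fin m, (corr p i.castSucc i.castSucc + corr p i.castSucc i.succ) +
        corr p (Fin.last m) (Fin.last m) - corr p (Fin.last m) 0 :=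
  rfl

end Chain

section Linearity

variable {n m : ℕ} {G : Type*} [Fintype G]

lemma corr_sum (r : G → Bool → Bool → Fin n → Fin m → ℝ) (x : Fin n) (y : Fin m) :
    corr (fun a b x y ↦ ∑ g, r g a b x y) x y = ∑ g, corr (r g) x y := by
  simp only [corr, Fintype.sum_bool, mul_sum, sum_add_distrib]

lemma chainBell_sum (hn : 0 < n) (r : G → Bool → Bool → Fin n → Fin n → ℝ) :
    chainBell hn (fun a b x y ↦ ∑ g, r g a b x y) = ∑ g, chainBell hn (r g) := by
  simp only [chainBell, corr_sum, sum_sub_distrib, sum_add_distrib]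
  rw [sum_comm, sum_comm (s := univ (α := Fin (n - 1)))]

end Linearity

section NoSignaling

variable {n m : ℕ}

/-- An unnormalised no-signaling box, such as the part of a tripartite box in which Grace obtains a
given outcome. -/
structure IsNSWeight (r : Bool → Bool → Fin n → Fin m → ℝ) : Prop where
  nonneg : ∀ a b x y, 0 ≤ r a b x y
  alice_marginal : ∀ a x y y', ∑ b, r a b x y = ∑ b, r a b x y'
  bob_marginal : ∀ b y x x', ∑ a, r a b x y = ∑ a, r a b x' y

/-- The total weight of an unnormalised box under inputs `x` and `y`. -/
def mass (r : Bool → Bool → Fin n → Fin m → ℝ) (x : Fin n) (y : Fin m) : ℝ :=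
  ∑ a, ∑ b, r a b x y

/-- The unnormalised expectation `⟨A_x⟩` when Bob's input is `y`. -/
def aliceMean (r : Bool → Bool → Fin n → Fin m → ℝ) (x : Fin n) (y : Fin m) : ℝ :=
  ∑ a, ∑ b, sgn a * r a b x y

/-- The unnormalised expectation `⟨B_y⟩` when Alice's input is `x`. -/
def bobMean (r : Bool → Bool → Fin n → Fin m → ℝ) (x : Fin n) (y : Fin m) : ℝ :=
  ∑ a, ∑ b, sgn b * r a b x y

lemma corr_le_mass_sub_abs {r : Bool → Bool → Fin n → Fin m → ℝ} {x : Fin n} {y : Fin m}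
    (hr : ∀ a b, 0 ≤ r a b x y) :
    corr r x y ≤ mass r x y - |aliceMean r x y - bobMean r x y| := by
  rw [le_sub_comm, abs_le]
  simp only [corr, mass, aliceMean, bobMean, sgn, Fintype.sum_bool, if_true, Bool.false_eq_true,
    if_false]
  constructor <;> linarith [hr true false, hr false true]

lemma neg_corr_le_mass_sub_abs {r : Bool → Bool → Fin n → Fin m → ℝ} {x : Fin n} {y : Fin m}
    (hr : ∀ a b, 0 ≤ r a b x y) :
    -corr r x y ≤ mass r x y - |aliceMean r x y + bobMean r x y| := by
  rw [le_sub_comm, abs_le]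
  simp only [corr, mass, aliceMean, bobMean, sgn, Fintype.sum_bool, if_true, Bool.false_eq_true,
    if_false]
  constructor <;> linarith [hr true true, hr false false]

namespace IsNSWeight

variable {r : Bool → Bool → Fin n → Fin m → ℝ}

lemma mass_eq (hr : IsNSWeight r) (x x' : Fin n) (y y' : Fin m) :
    mass r x y = mass r x' y' := by
  calc mass r x y = ∑ a, ∑ b, r a b x y' := sum_congr rfl fun a _ ↦ hr.alice_marginal a x y y'
    _ = ∑ b, ∑ a, r a b x' y' := by
        rw [sum_comm]; exact sum_congr rfl fun b _ ↦ hr.bob_marginal b y' x x'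
    _ = mass r x' y' := sum_comm

lemma aliceMean_eq (hr : IsNSWeight r) (x : Fin n) (y y' : Fin m) :
    aliceMean r x y = aliceMean r x y' := by
  simp only [aliceMean, ← mul_sum, hr.alice_marginal _ x y y']

lemma bobMean_eq (hr : IsNSWeight r) (x x' : Fin n) (y : Fin m) :
    bobMean r x y = bobMean r x' y := by
  unfold bobMean
  rw [sum_comm, sum_comm (f := fun a b ↦ sgn b * r a b x' y)]
  simp only [← mul_sum, hr.bob_marginal _ y x x']

theorem chainBell_le {r : Bool → Bool → Fin n → Fin n → ℝ} (hr : IsNSWeight r) (hn : 0 < n) :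
    chainBell hn r ≤ 2 * n * mass r ⟨0, hn⟩ ⟨0, hn⟩ - 2 * |bobMean r ⟨0, hn⟩ ⟨0, hn⟩| := by
  obtain ⟨k, rfl⟩ := Nat.exists_eq_add_one.mpr hn
  change _ ≤ 2 * ((k + 1 : ℕ) : ℝ) * mass r 0 0 - 2 * |bobMean r 0 0|
  set W := mass r 0 0
  let A : Fin (k + 1) → ℝ := fun x ↦ aliceMean r x 0
  let B : Fin (k + 1) → ℝ := fun y ↦ bobMean r 0 y
  have hcorr (x y) : corr r x y ≤ W - |A x - B y| := by
    simpa only [hr.mass_eq x 0 y 0, hr.aliceMean_eq x y 0, hr.bobMean_eq x 0 y]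
      using corr_le_mass_sub_abs fun a b ↦ hr.nonneg a b x y
  have hneg (x y) : -corr r x y ≤ W - |A x + B y| := by
    simpa only [hr.mass_eq x 0 y 0, hr.aliceMean_eq x y 0, hr.bobMean_eq x 0 y]
      using neg_corr_le_mass_sub_abs fun a b ↦ hr.nonneg a b x y
  have hsum : ∑ i : Fin k, (corr r i.castSucc i.castSucc + corr r i.castSucc i.succ) ≤
      2 * k * W - ∑ i : Fin k, (|A i.castSucc - B i.castSucc| + |A i.castSucc - B i.succ|) := by
    calc _ ≤ ∑ i : Fin k,
          (2 * W - (|A i.castSucc - B i.castSucc| + |A i.castSucc - B i.succ|)) :=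
          sum_le_sum fun i _ ↦ by
            linarith [hcorr i.castSucc i.castSucc, hcorr i.castSucc i.succ]
      _ = _ := by
          rw [sum_sub_distrib, sum_const, card_univ, Fintype.card_fin, nsmul_eq_mul]; ring
  rw [chainBell_succ]
  push_cast
  linarith [two_mul_abs_le_sum_chain A B, hcorr (Fin.last k) (Fin.last k), hneg (Fin.last k) 0]

end IsNSWeight

end NoSignaling

section Disturbance

variable {n m : ℕ}

/-- The average total disturbance `𝒟` that replacing `p` by `q` causes to Bob's observables other
than `B₁`. Alice's weights are read off from `p` at Bob's first input. -/
noncomputable def disturbance (hn : 0 < n) (p q : Bool → Bool → Fin n → Fin n → ℝ) : ℝ :=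
  ∑ x, (1 / (n : ℝ)) * ∑ a, (∑ b, p a b x ⟨0, hn⟩) *
    ∑ y ∈ univ.filter (fun y ↦ y ≠ (⟨0, hn⟩ : Fin n)), ∑ b,
      |p a b x y / (∑ b', p a b' x y) - q a b x y / (∑ b', q a b' x y)|

lemma abs_sgn (a : Bool) : |sgn a| = 1 := by
  cases a <;> simp [sgn]

lemma abs_corr_sub_corr_le (p q : Bool → Bool → Fin n → Fin m → ℝ) (x : Fin n) (y : Fin m) :
    |corr p x y - corr q x y| ≤ ∑ a, ∑ b, |p a b x y - q a b x y| := by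
  simp only [corr, ← sum_sub_distrib, ← mul_sub]
  refine (abs_sum_le_sum_abs _ _).trans (sum_le_sum fun a _ ↦ ?_)
  refine (abs_sum_le_sum_abs _ _).trans_eq (sum_congr rfl fun b _ ↦ ?_)
  rw [abs_mul, abs_mul, abs_sgn, abs_sgn, one_mul, one_mul]

lemma chainBell_sub_le (hn : 0 < n) {p q : Bool → Bool → Fin n → Fin n → ℝ}
    (hpq : ∀ a b x, p a b x ⟨0, hn⟩ = q a b x ⟨0, hn⟩) :
    chainBell hn p - chainBell hn q ≤
      ∑ x, ∑ y ∈ univ.filter (fun y ↦ y ≠ (⟨0, hn⟩ : Fin n)),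
        ∑ a, ∑ b, |p a b x y - q a b x y| := by
  obtain ⟨k, rfl⟩ := Nat.exists_eq_add_one.mpr hn
  let c : Fin (k + 1) → Fin (k + 1) → ℝ := fun x y ↦ corr p x y - corr q x y
  have hfirst (x) : c x ⟨0, hn⟩ = 0 := by simp only [c, corr, hpq, sub_self]
  calc chainBell hn p - chainBell hn q
      = ∑ i : Fin k, (c i.castSucc i.castSucc + c i.castSucc i.succ) +
          c (Fin.last k) (Fin.last k) - c (Fin.last k) ⟨0, hn⟩ := by
        simp only [chainBell_succ, c, sum_add_distrib, sum_sub_distrib, Fin.zero_eta]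
        ring
    _ ≤ ∑ x, ∑ y, |c x y| := by
        rw [hfirst, sub_zero]
        exact sum_chain_le_sum_abs c
    _ = ∑ x, ∑ y ∈ univ.filter (fun y ↦ y ≠ ⟨0, hn⟩), |c x y| := by
        refine sum_congr rfl fun x _ ↦ (sum_filter_of_ne fun y _ hy ↦ ?_).symm
        rintro rfl
        exact hy (by rw [hfirst, abs_zero])
    _ ≤ _ := sum_le_sum fun x _ ↦ sum_le_sum fun y _ ↦ abs_corr_sub_corr_le p q x y

lemma disturbance_eq_sum_abs (hn : 0 < n) {p q : Bool → Bool → Fin n → Fin n → ℝ}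
    (hp : ∀ a b x y, 0 ≤ p a b x y) (hq : ∀ a b x y, 0 ≤ q a b x y)
    (hpA : ∀ a x y y', ∑ b, p a b x y = ∑ b, p a b x y')
    (hqp : ∀ a x y, ∑ b, q a b x y = ∑ b, p a b x y) :
    disturbance hn p q =
      1 / n * ∑ x, ∑ y ∈ univ.filter (fun y ↦ y ≠ (⟨0, hn⟩ : Fin n)),
        ∑ a, ∑ b, |p a b x y - q a b x y| := by
  rw [disturbance, ← mul_sum]
  congr 1
  refine sum_congr rfl fun x _ ↦ ?_
  rw [sum_comm]
  refine sum_congr rfl fun a _ ↦ ?_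
  rw [mul_sum]
  refine sum_congr rfl fun y _ ↦ ?_
  rw [hpA a x _ y]
  exact sum_mul_sum_abs_div_sum_sub (fun b ↦ hp a b x y) (fun b ↦ hq a b x y) (hqp a x y)

lemma chainBell_sub_le_mul_disturbance (hn : 0 < n) {p q : Bool → Bool → Fin n → Fin n → ℝ}
    (hp : ∀ a b x y, 0 ≤ p a b x y) (hq : ∀ a b x y, 0 ≤ q a b x y)
    (hpA : ∀ a x y y', ∑ b, p a b x y = ∑ b, p a b x y')
    (hqp : ∀ a x y, ∑ b, q a b x y = ∑ b, p a b x y)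
    (hpq : ∀ a b x, p a b x ⟨0, hn⟩ = q a b x ⟨0, hn⟩) :
    chainBell hn p - chainBell hn q ≤ n * disturbance hn p q := by
  have hn' : (n : ℝ) ≠ 0 := Nat.cast_ne_zero.2 hn.ne'
  rw [disturbance_eq_sum_abs hn hp hq hpA hqp, ← mul_assoc, mul_one_div_cancel hn', one_mul]
  exact chainBell_sub_le hn hpq

end Disturbance

section Grace

variable {n m : ℕ}

/-- The Alice–Bob marginal of a tripartite box. -/
def forgetGrace (pt : Bool → Bool → Bool → Fin n → Fin m → ℝ) :
    Bool → Bool → Fin n → Fin m → ℝ :=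
  fun a b x y ↦ ∑ g, pt a b g x y

/-- The unnormalised Alice–Bob box in which Grace obtains the outcome `g`. -/
def graceOutcome (pt : Bool → Bool → Bool → Fin n → Fin m → ℝ) (g : Bool) :
    Bool → Bool → Fin n → Fin m → ℝ :=
  fun a b x y ↦ pt a b g x y

lemma sum_mass_graceOutcome (pt : Bool → Bool → Bool → Fin n → Fin m → ℝ) (x : Fin n)
    (y : Fin m) : ∑ g, mass (graceOutcome pt g) x y = mass (forgetGrace pt) x y := by
  simp only [mass, graceOutcome, forgetGrace, Fintype.sum_bool]
  ring

namespace IsNS3Box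

variable {pt : Bool → Bool → Bool → Fin n → Fin m → ℝ}

lemma isNSWeight_graceOutcome (hpt : IsNS3Box pt) (g : Bool) :
    IsNSWeight (graceOutcome pt g) where
  nonneg a b := hpt.1 a b g
  alice_marginal a := hpt.2.2.1 a g
  bob_marginal b := hpt.2.2.2 b g

lemma forgetGrace_nonneg (hpt : IsNS3Box pt) (a b : Bool) (x : Fin n) (y : Fin m) :
    0 ≤ forgetGrace pt a b x y :=
  sum_nonneg fun g _ ↦ hpt.1 a b g x y

lemma mass_forgetGrace (hpt : IsNS3Box pt) (x : Fin n) (y : Fin m) :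
    mass (forgetGrace pt) x y = 1 :=
  hpt.2.1 x y

lemma alice_marginal_forgetGrace (hpt : IsNS3Box pt) (a : Bool) (x : Fin n) (y y' : Fin m) :
    ∑ b, forgetGrace pt a b x y = ∑ b, forgetGrace pt a b x y' := by
  simp only [forgetGrace]
  rw [sum_comm, sum_comm (f := fun b g ↦ pt a b g x y')]
  exact sum_congr rfl fun g _ ↦ hpt.2.2.1 a g x y y'

theorem chainBell_forgetGrace_le {pt : Bool → Bool → Bool → Fin n → Fin n → ℝ}
    (hpt : IsNS3Box pt) (hn : 0 < n) :
    chainBell hn (forgetGrace pt) ≤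
      2 * n - 2 * ∑ g, |bobMean (graceOutcome pt g) ⟨0, hn⟩ ⟨0, hn⟩| := by
  calc chainBell hn (forgetGrace pt) = ∑ g, chainBell hn (graceOutcome pt g) :=
        chainBell_sum hn (graceOutcome pt)
    _ ≤ ∑ g, (2 * n * mass (graceOutcome pt g) ⟨0, hn⟩ ⟨0, hn⟩ -
          2 * |bobMean (graceOutcome pt g) ⟨0, hn⟩ ⟨0, hn⟩|) :=
        sum_le_sum fun g _ ↦ (hpt.isNSWeight_graceOutcome g).chainBell_le hn
    _ = _ := by
        rw [sum_sub_distrib, ← mul_sum, ← mul_sum, sum_mass_graceOutcome, hpt.mass_forgetGrace,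
          mul_one]

end IsNS3Box

/-- Grace's output agrees with Bob's output for the input `y` with probability `1/2 + ε`,
independently of everything else. Stated without division, so that events of probability zero need
no separate treatment. -/
def IsGentleMeasurement (ε : ℝ) (y : Fin m) (pt : Bool → Bool → Bool → Fin n → Fin m → ℝ) : Prop :=
  ∀ a b g x, pt a b g x y = forgetGrace pt a b x y * if g = b then 1 / 2 + ε else 1 / 2 - ε

lemma IsGentleMeasurement.bobMean_graceOutcome {ε : ℝ} {y : Fin m}
    {pt : Bool → Bool → Bool → Fin n → Fin m → ℝ} (h : IsGentleMeasurement ε y pt) (g : Bool)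
    (x : Fin n) :
    bobMean (graceOutcome pt g) x y =
      bobMean (forgetGrace pt) x y / 2 + sgn g * (ε * mass (forgetGrace pt) x y) := by
  simp only [bobMean, mass, graceOutcome, h _ _ g x, Fintype.sum_bool]
  cases g <;> simp only [sgn, if_true, if_false, reduceCtorEq] <;> ring

lemma IsGentleMeasurement.two_mul_abs_le_sum_abs_bobMean {ε : ℝ} {y : Fin m}
    {pt : Bool → Bool → Bool → Fin n → Fin m → ℝ} (h : IsGentleMeasurement ε y pt) (x : Fin n) :
    2 * |ε * mass (forgetGrace pt) x y| ≤ ∑ g, |bobMean (graceOutcome pt g) x y| := by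
  rw [Fintype.sum_bool]
  calc 2 * |ε * mass (forgetGrace pt) x y|
      = |bobMean (graceOutcome pt true) x y - bobMean (graceOutcome pt false) x y| := by
        rw [h.bobMean_graceOutcome, h.bobMean_graceOutcome, ← abs_two, ← abs_mul]
        congr 1
        simp only [sgn, if_true, Bool.false_eq_true, if_false]
        ring
    _ ≤ _ := abs_sub _ _

lemma IsNS3Box.isGentleMeasurement_of_div_eq {ε : ℝ} {y : Fin m}
    {pt : Bool → Bool → Bool → Fin n → Fin m → ℝ} (hpt : IsNS3Box pt)
    (h : ∀ a x b, 0 < (∑ g, pt a b g x y) → ∀ g,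
      pt a b g x y / (∑ g', pt a b g' x y) = if g = b then 1 / 2 + ε else 1 / 2 - ε) :
    IsGentleMeasurement ε y pt :=
  fun a b g x ↦ eq_sum_mul_of_div_sum_eq (fun g' ↦ hpt.1 a b g' x y) fun hpos ↦ h a x b hpos g

lemma IsNS3Box.chainBell_forgetGrace_le_of_isGentleMeasurement {ε : ℝ} {hn : 0 < n}
    {pt : Bool → Bool → Bool → Fin n → Fin n → ℝ} (hpt : IsNS3Box pt)
    (h : IsGentleMeasurement ε ⟨0, hn⟩ pt) :
    chainBell hn (forgetGrace pt) ≤ 2 * n - 4 * |ε| := by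
  have hbias := h.two_mul_abs_le_sum_abs_bobMean ⟨0, hn⟩
  rw [hpt.mass_forgetGrace, mul_one] at hbias
  linarith [hpt.chainBell_forgetGrace_le hn]

end Grace

theorem chain_gain_disturbance_general {n : ℕ} (hn : 0 < n) (ε : ℝ)
    (p : Bool → Bool → Fin n → Fin n → ℝ) (hp : ∀ a b x y, 0 ≤ p a b x y)
    (hpA : ∀ a x y y', ∑ b, p a b x y = ∑ b, p a b x y')
    (pt : Bool → Bool → Bool → Fin n → Fin n → ℝ) (hpt : IsNS3Box pt)
    (hA : ∀ a x, (∑ b, ∑ g, pt a b g x ⟨0, hn⟩) = ∑ b, p a b x ⟨0, hn⟩)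
    (hi : ∀ a x, 0 < (∑ b, p a b x ⟨0, hn⟩) → ∀ b,
      (∑ g, pt a b g x ⟨0, hn⟩) / (∑ b', ∑ g, pt a b' g x ⟨0, hn⟩) =
        p a b x ⟨0, hn⟩ / (∑ b', p a b' x ⟨0, hn⟩))
    (hii : ∀ a x b, 0 < (∑ g, pt a b g x ⟨0, hn⟩) → ∀ g,
      pt a b g x ⟨0, hn⟩ / (∑ g', pt a b g' x ⟨0, hn⟩) =
        if g = b then 1 / 2 + ε else 1 / 2 - ε) :
    disturbance hn p (forgetGrace pt) ≥
      (4 / (n : ℝ)) * |ε| - (1 / (n : ℝ)) * (2 * n - chainBell hn p) := by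
  have hmarginal (a x y) : ∑ b, forgetGrace pt a b x y = ∑ b, p a b x y := by
    rw [hpt.alice_marginal_forgetGrace a x y ⟨0, hn⟩, hpA a x y ⟨0, hn⟩]
    exact hA a x
  have hfirst (a b x) : p a b x ⟨0, hn⟩ = forgetGrace pt a b x ⟨0, hn⟩ := by
    rw [eq_sum_mul_of_div_sum_eq (fun b' ↦ hpt.forgetGrace_nonneg a b' x ⟨0, hn⟩)
      fun hpos ↦ hi a x (hA a x ▸ hpos) b, hmarginal, sum_mul_div_sum fun b' ↦ hp a b' x ⟨0, hn⟩]
  have hgain : chainBell hn (forgetGrace pt) ≤ 2 * n - 4 * |ε| :=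
    hpt.chainBell_forgetGrace_le_of_isGentleMeasurement (hpt.isGentleMeasurement_of_div_eq hii)
  have hloss := chainBell_sub_le_mul_disturbance hn hp hpt.forgetGrace_nonneg hpA hmarginal hfirst
  have hn' : (0 : ℝ) < n := Nat.cast_pos.2 hn
  calc 4 / n * |ε| - 1 / n * (2 * n - chainBell hn p)
      = (4 * |ε| - (2 * n - chainBell hn p)) / n := by ring
    _ ≤ disturbance hn p (forgetGrace pt) := (div_le_iff₀' hn').2 (by linarith)

/-- Gentle measurement of `B₁` in the chain Bell scenario: the average total disturbance
satisfies `𝒟 ≥ (4/n)·ε − (1/n)(2n − β_chain(p))`. -/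
theorem chain_gain_disturbance {n : ℕ} (hn : 0 < n)
    (ε : ℝ) (hε : ε ∈ Set.Icc (0 : ℝ) (1/2))
    (p : Bool → Bool → Fin n → Fin n → ℝ) (hp : IsNSBox p)
    (pt : Bool → Bool → Bool → Fin n → Fin n → ℝ) (hpt : IsNS3Box pt)
    (hA : ∀ a x, (∑ b, ∑ g, pt a b g x ⟨0, hn⟩) = ∑ b, p a b x ⟨0, hn⟩)
    (hi : ∀ a x, 0 < (∑ b, p a b x ⟨0, hn⟩) → ∀ b,
      (∑ g, pt a b g x ⟨0, hn⟩) / (∑ b', ∑ g, pt a b' g x ⟨0, hn⟩) =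
        p a b x ⟨0, hn⟩ / (∑ b', p a b' x ⟨0, hn⟩))
    (hii : ∀ a x b, 0 < (∑ g, pt a b g x ⟨0, hn⟩) → ∀ g,
      pt a b g x ⟨0, hn⟩ / (∑ g', pt a b g' x ⟨0, hn⟩) =
        if g = b then 1/2 + ε else 1/2 - ε) :
    (∑ x, (1 / (n : ℝ)) * ∑ a, (∑ b, p a b x ⟨0, hn⟩) *
        ∑ y ∈ Finset.univ.filter (fun y => y ≠ (⟨0, hn⟩ : Fin n)), ∑ b,
          |p a b x y / (∑ b', p a b' x y) -
            (∑ g, pt a b g x y) / (∑ b', ∑ g, pt a b' g x y)|) ≥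
      (4 / (n : ℝ)) * ε - (1 / (n : ℝ)) * (2 * n - chainBell hn p) := by
  have h := chain_gain_disturbance_general hn ε p hp.1 hp.2.2.1 pt hpt hA hi hii
  exact h.le.trans' (by gcongr; exact le_abs_self ε)
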